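/- Let n ≥ 2 and let δ satisfy 0 < δ ≤ 1 if n ≥ 3 and 0 < δ < 1 if n = 2. Let q ∈ C^∞(ℝⁿ∖{0}) be homogeneous of degree zero. There exists a constant C > 0 such that for every Schwartz function f on ℝⁿ, ‖ ⟨x⟩^{δ} q(D_x) f ‖_{L²(ℝⁿ)} ≤ C ‖ ⟨x⟩^{δ} f ‖_{L²(ℝⁿ)}. -/

import Mathlib

open MeasureTheory Real Complex RealInnerProductSpace

noncomputable section

/-- Fourier transform with convention `(2π)^(-n/2) ∫ e^(-ix·ξ) f(x) dx`. -/
def FT (n : ℕ) (f : EuclideanSpace ℝ (Fin n) → ℂ) (ξ : EuclideanSpace ℝ (Fin n)) : ℂ :=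
  ((2 * π) ^ (-(n : ℝ) / 2) : ℝ) •
    ∫ x : EuclideanSpace ℝ (Fin n), Complex.exp (-Complex.I * ((⟪x, ξ⟫ : ℝ) : ℂ)) * f x

/-- Inverse Fourier transform. -/
def IFT (n : ℕ) (F : EuclideanSpace ℝ (Fin n) → ℂ) (x : EuclideanSpace ℝ (Fin n)) : ℂ :=
  ((2 * π) ^ (-(n : ℝ) / 2) : ℝ) •
    ∫ ξ : EuclideanSpace ℝ (Fin n), Complex.exp (Complex.I * ((⟪x, ξ⟫ : ℝ) : ℂ)) * F ξ

/-- Fourier multiplier with symbol `q`: `q(D_x) f = IFT (q · FT f)`. -/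
def mult (n : ℕ) (q : EuclideanSpace ℝ (Fin n) → ℂ) (f : EuclideanSpace ℝ (Fin n) → ℂ) :
    EuclideanSpace ℝ (Fin n) → ℂ :=
  IFT n fun ξ => q ξ * FT n f ξ

/-!
On the Fourier side, multiplication by `e ^ (2πi⟪h, x⟫) - 1` is a difference of step `h`.
Integrating `|e ^ (2πita) - 1| ^ 2` against `t ^ (-s) dt / t` over `t > 0` gives a multiple of
`|a| ^ s` when `0 < s < 2`, and the case `s = 2` is a limit `t → 0`; so for a unit vector `e` the
weight `|⟪e, x⟫| ^ (2 * δ)` is controlled by the differences of `q • 𝓕 f` in the direction `e`. By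
the Leibniz rule and the symbol estimate `|q (ξ + h) - q ξ| ≤ 2 * M * min 1 (|h| / |ξ|)`, these
cost the same weight on `f` plus the term `∫ |ξ| ^ (-2 * δ) * |𝓕 f ξ| ^ 2`.

Hardy's inequality on the Fourier side bounds that term by `∫ |x| ^ (2 * δ) * |f x| ^ 2` as soon
as `2 * δ < n`: on a ball `|ξ| < r`, the part of `f` in `|x| ≤ 1 / r` is handled by a weighted
Cauchy-Schwarz inequality and the rest by Plancherel's theorem, and one integrates over `r`.
Summing over an orthonormal basis gives the theorem since, for `δ ≤ 1`,
`(1 + |x| ^ 2) ^ δ ≤ 1 + ∑ i, |⟪e i, x⟫| ^ (2 * δ)`.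
-/

section Lintegral

open scoped ENNReal

variable {α E : Type*} [MeasurableSpace α] {μ : Measure α} [NormedAddCommGroup E]

theorem eLpNorm_two_sq (f : α → E) : eLpNorm f 2 μ ^ 2 = ∫⁻ x, ‖f x‖ₑ ^ 2 ∂μ := by
  simpa using eLpNorm_nnreal_pow_eq_lintegral (f := f) (μ := μ) (p := 2) two_ne_zero

theorem enorm_add_sq_le (a b : E) : ‖a + b‖ₑ ^ 2 ≤ 2 * ‖a‖ₑ ^ 2 + 2 * ‖b‖ₑ ^ 2 := by
  have h : (‖a‖ₑ + ‖b‖ₑ) ^ 2 ≤ 2 * (‖a‖ₑ ^ 2 + ‖b‖ₑ ^ 2) := by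
    simpa [one_add_one_eq_two, show (2 : ℝ) - 1 = 1 by norm_num] using
      ENNReal.rpow_add_le_mul_rpow_add_rpow ‖a‖ₑ ‖b‖ₑ (p := 2) (by norm_num)
  rw [← mul_add]
  exact (pow_le_pow_left' (enorm_add_le a b) 2).trans h

theorem sq_lintegral_mul_le {f g : α → ℝ≥0∞} (hf : AEMeasurable f μ) (hg : AEMeasurable g μ) :
    (∫⁻ x, f x * g x ∂μ) ^ 2 ≤ (∫⁻ x, f x ^ 2 ∂μ) * ∫⁻ x, g x ^ 2 ∂μ := by
  have h := pow_le_pow_left'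
    (ENNReal.lintegral_mul_le_Lp_mul_Lq μ Real.HolderConjugate.two_two hf hg) 2
  rw [mul_pow, ← ENNReal.rpow_natCast (_ ^ _) 2, ← ENNReal.rpow_natCast (_ ^ _) 2,
    ← ENNReal.rpow_mul, ← ENNReal.rpow_mul] at h
  simpa using h

theorem sq_lintegral_le_lintegral_inv_mul_lintegral_mul_sq {w g : α → ℝ≥0∞}
    (hw : AEMeasurable w μ) (hw0 : ∀ᵐ x ∂μ, w x ≠ 0) (hw_top : ∀ᵐ x ∂μ, w x ≠ ⊤)
    (hg : AEMeasurable g μ) :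
    (∫⁻ x, g x ∂μ) ^ 2 ≤ (∫⁻ x, (w x)⁻¹ ∂μ) * ∫⁻ x, w x * g x ^ 2 ∂μ := by
  have sq_sqrt (y : ℝ≥0∞) : (y ^ (1 / 2 : ℝ)) ^ 2 = y := by
    rw [← ENNReal.rpow_natCast, ← ENNReal.rpow_mul]
    simp
  have hgw : (fun x => ((w x)⁻¹ ^ (1 / 2 : ℝ)) * (w x ^ (1 / 2 : ℝ) * g x)) =ᵐ[μ] g := by
    filter_upwards [hw0, hw_top] with x h0 htop
    rw [← mul_assoc, ← ENNReal.mul_rpow_of_nonneg _ _ (by norm_num),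
      ENNReal.inv_mul_cancel h0 htop, ENNReal.one_rpow, one_mul]
  calc (∫⁻ x, g x ∂μ) ^ 2
      = (∫⁻ x, ((w x)⁻¹ ^ (1 / 2 : ℝ)) * (w x ^ (1 / 2 : ℝ) * g x) ∂μ) ^ 2 := by
        rw [lintegral_congr_ae hgw]
    _ ≤ (∫⁻ x, ((w x)⁻¹ ^ (1 / 2 : ℝ)) ^ 2 ∂μ) * ∫⁻ x, (w x ^ (1 / 2 : ℝ) * g x) ^ 2 ∂μ :=
        sq_lintegral_mul_le (hw.inv.pow_const _) ((hw.pow_const _).mul hg)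
    _ = _ := by simp only [mul_pow, sq_sqrt]

theorem lintegral_comp_smul_addHaar {V : Type*} [NormedAddCommGroup V] [NormedSpace ℝ V]
    [FiniteDimensional ℝ V] [MeasurableSpace V] [BorelSpace V] (ν : Measure V)
    [ν.IsAddHaarMeasure] (f : V → ℝ≥0∞) {r : ℝ} (hr : r ≠ 0) :
    ∫⁻ x, f (r • x) ∂ν = ENNReal.ofReal |(r ^ Module.finrank ℝ V)⁻¹| * ∫⁻ x, f x ∂ν := by
  rw [← smul_eq_mul, ← lintegral_smul_measure, ← Measure.map_addHaar_smul ν hr]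
  exact (lintegral_map_equiv f
    (Homeomorph.smul (α := V) (isUnit_iff_ne_zero.2 hr).unit).toMeasurableEquiv).symm

end Lintegral

section MellinMeasure

open scoped ENNReal

variable {s : ℝ}

/-- The measure `t ^ (-s) dt / t` on the half-line `t > 0`: integrating a dilate `φ (t * a)` against
it produces the power `a ^ s`. -/
def mellinMeasure (s : ℝ) : Measure ℝ :=
  (volume.restrict (Set.Ioi 0)).withDensity fun t => ENNReal.ofReal (t ^ (-1 - s))

instance : SFinite (mellinMeasure s) := by
  unfold mellinMeasure
  infer_instance

theorem ae_mellinMeasure_pos (s : ℝ) : ∀ᵐ t ∂mellinMeasure s, 0 < t :=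
  (withDensity_absolutelyContinuous _ _).ae_le (ae_restrict_mem measurableSet_Ioi)

theorem lintegral_mellinMeasure (φ : ℝ → ℝ≥0∞) :
    ∫⁻ t, φ t ∂mellinMeasure s = ∫⁻ t in Set.Ioi 0, ENNReal.ofReal (t ^ (-1 - s)) * φ t :=
  lintegral_withDensity_eq_lintegral_mul_non_measurable _ (by fun_prop) (by simp) _

theorem lintegral_mellinMeasure_mono {φ ψ : ℝ → ℝ≥0∞} (h : ∀ t > 0, φ t ≤ ψ t) :
    ∫⁻ t, φ t ∂mellinMeasure s ≤ ∫⁻ t, ψ t ∂mellinMeasure s :=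
  lintegral_mono_ae ((ae_mellinMeasure_pos s).mono h)

theorem lintegral_mellinMeasure_comp_mul (φ : ℝ → ℝ≥0∞) (hφ : φ 0 = 0) (hs : s ≠ 0) {a : ℝ}
    (ha : 0 ≤ a) :
    ∫⁻ t, φ (t * a) ∂mellinMeasure s = ENNReal.ofReal (a ^ s) * ∫⁻ t, φ t ∂mellinMeasure s := by
  rcases ha.eq_or_lt with rfl | ha
  · simp [hφ, Real.zero_rpow hs]
  set Φ : ℝ → ℝ≥0∞ := (Set.Ioi 0).indicator fun t => ENNReal.ofReal (t ^ (-1 - s)) * φ t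
  have dilate (t : ℝ) :
      (Set.Ioi 0).indicator (fun t => ENNReal.ofReal (t ^ (-1 - s)) * φ (t * a)) t =
        ENNReal.ofReal (a ^ (1 + s)) * Φ (a • t) := by
    simp only [Φ]
    by_cases ht : 0 < t
    · have hat : 0 < a * t := by positivity
      rw [Set.indicator_of_mem (by exact ht), Set.indicator_of_mem (by exact hat), smul_eq_mul,
        mul_comm t a, ← mul_assoc, ← ENNReal.ofReal_mul (by positivity),
        Real.mul_rpow ha.le ht.le, ← mul_assoc, ← Real.rpow_add ha]
      simp
    · have hat : ¬ 0 < a * t := by simpa [ha] using ht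
      rw [Set.indicator_of_notMem (by exact ht), Set.indicator_of_notMem (by exact hat), mul_zero]
  rw [lintegral_mellinMeasure, lintegral_mellinMeasure, ← lintegral_indicator measurableSet_Ioi,
    ← lintegral_indicator measurableSet_Ioi]
  simp_rw [dilate]
  rw [lintegral_const_mul' _ _ ENNReal.ofReal_ne_top,
    lintegral_comp_smul_addHaar volume Φ ha.ne', ← mul_assoc, ← ENNReal.ofReal_mul (by positivity)]
  congr 2
  rw [Module.finrank_self, pow_one, abs_of_pos (by positivity), Real.rpow_add ha, Real.rpow_one]
  field_simp

theorem lintegral_mellinMeasure_ne_zero {φ : ℝ → ℝ≥0∞} (hφ : Measurable φ) {a b : ℝ} (ha : 0 ≤ a)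
    (hab : a < b) (hpos : ∀ t ∈ Set.Ioo a b, φ t ≠ 0) : ∫⁻ t, φ t ∂mellinMeasure s ≠ 0 := by
  have hm : Measurable fun t => ENNReal.ofReal (t ^ (-1 - s)) * φ t := by fun_prop
  rw [lintegral_mellinMeasure, ← pos_iff_ne_zero, setLIntegral_pos_iff hm]
  refine lt_of_lt_of_le (b := volume (Set.Ioo a b)) (by simpa) (measure_mono fun t ht => ?_)
  have ht0 : 0 < t := ha.trans_lt ht.1
  exact ⟨mul_ne_zero (ENNReal.ofReal_pos.2 (Real.rpow_pos_of_pos ht0 _)).ne' (hpos t ht), ht0⟩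

variable {α : Type*} [MeasurableSpace α] {μ : Measure α} [SFinite μ]

theorem lintegral_mellinMeasure_lintegral_comp_mul {φ : ℝ → ℝ≥0∞} (hφ : Measurable φ)
    (hφ0 : φ 0 = 0) (hs : s ≠ 0) {a : α → ℝ} (ha : Measurable a) (ha0 : ∀ x, 0 ≤ a x)
    {u : α → ℝ≥0∞} (hu : AEMeasurable u μ) :
    ∫⁻ t, ∫⁻ x, φ (t * a x) * u x ∂μ ∂mellinMeasure s =
      (∫⁻ t, φ t ∂mellinMeasure s) * ∫⁻ x, ENNReal.ofReal (a x ^ s) * u x ∂μ := by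
  have hm : AEMeasurable (Function.uncurry fun t x => φ (t * a x) * u x)
      ((mellinMeasure s).prod μ) :=
    AEMeasurable.mul (by fun_prop) hu.comp_snd
  rw [lintegral_lintegral_swap hm, ← lintegral_const_mul'' _ (by fun_prop)]
  refine lintegral_congr fun x => ?_
  rw [lintegral_mul_const _ (by fun_prop), lintegral_mellinMeasure_comp_mul φ hφ0 hs (ha0 x),
    mul_left_comm, mul_assoc]

/-- The power `t ^ b` truncated at `t = 1`, which makes it integrable at infinity against
`mellinMeasure s`. -/
def truncPow (b t : ℝ) : ℝ≥0∞ := ENNReal.ofReal (min 1 t ^ b)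

namespace truncPow

variable {b t : ℝ}

@[fun_prop]
theorem measurable (b : ℝ) : Measurable (truncPow b) := by
  unfold truncPow
  fun_prop

theorem zero_right (hb : b ≠ 0) : truncPow b 0 = 0 := by simp [truncPow, Real.zero_rpow hb]

theorem of_one_le (ht : 1 ≤ t) : truncPow b t = 1 := by simp [truncPow, min_eq_left ht]

theorem of_le_one (ht : t ≤ 1) : truncPow b t = ENNReal.ofReal (t ^ b) := by
  simp [truncPow, min_eq_right ht]

theorem le_rpow (hb : 0 ≤ b) (ht : 0 ≤ t) : truncPow b t ≤ ENNReal.ofReal (t ^ b) :=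
  ENNReal.ofReal_le_ofReal (Real.rpow_le_rpow (by positivity) (min_le_right _ _) hb)

theorem two_eq (t : ℝ) : truncPow 2 t = ENNReal.ofReal (min 1 t ^ 2) := by
  rw [truncPow, Real.rpow_two]

theorem lintegral_mellinMeasure_ne_top (hs : 0 < s) (hsb : s < b) :
    ∫⁻ t, truncPow b t ∂mellinMeasure s ≠ ⊤ := by
  have near_zero : IntegrableOn (fun t : ℝ => t ^ (b - 1 - s)) (Set.Ioc 0 1) := by
    rw [← intervalIntegrable_iff_integrableOn_Ioc_of_le zero_le_one]
    exact intervalIntegral.intervalIntegrable_rpow' (by linarith)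
  have near_infinity : IntegrableOn (fun t : ℝ => t ^ (-1 - s)) (Set.Ioi 1) :=
    integrableOn_Ioi_rpow_of_lt (by linarith) one_pos
  rw [lintegral_mellinMeasure, ← Set.Ioc_union_Ioi_eq_Ioi zero_le_one,
    lintegral_union measurableSet_Ioi Set.Ioc_disjoint_Ioi_same, ENNReal.add_ne_top]
  constructor
  · rw [setLIntegral_congr_fun (g := fun t => ENNReal.ofReal (t ^ (b - 1 - s)))
      measurableSet_Ioc fun t ht => ?_]
    · exact near_zero.lintegral_lt_top.ne
    · rw [of_le_one ht.2, ← ENNReal.ofReal_mul (Real.rpow_nonneg ht.1.le _), ← Real.rpow_add ht.1]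
      ring_nf
  · rw [setLIntegral_congr_fun (g := fun t => ENNReal.ofReal (t ^ (-1 - s)))
      measurableSet_Ioi fun t ht => ?_]
    · exact near_infinity.lintegral_lt_top.ne
    · rw [of_one_le (le_of_lt ht), mul_one]

end truncPow

end MellinMeasure

section Plancherel

open FourierTransform SchwartzMap

variable {V E : Type*} [NormedAddCommGroup V] [InnerProductSpace ℝ V] [FiniteDimensional ℝ V]
  [MeasurableSpace V] [BorelSpace V] [NormedAddCommGroup E] [InnerProductSpace ℂ E]
  {f : V → E}

theorem continuous_fourier (hf : Integrable f) : Continuous (𝓕 f) :=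
  VectorFourier.fourierIntegral_continuous continuous_fourierChar
    (innerSL ℝ (E := V)).continuous₂ hf

theorem continuous_fourierInv (hf : Integrable f) : Continuous (𝓕⁻ f) := by
  rw [funext (Real.fourierInv_eq_fourier_neg f)]
  exact (continuous_fourier hf).comp continuous_neg

theorem enorm_fourier_le (f : V → E) (ξ : V) : ‖𝓕 f ξ‖ₑ ≤ ∫⁻ x, ‖f x‖ₑ := by
  rw [Real.fourier_eq]
  refine (enorm_integral_le_lintegral_enorm _).trans_eq (lintegral_congr fun x => ?_)
  rw [← ofReal_norm, Circle.norm_smul, ofReal_norm]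

theorem fourier_add_apply {g : V → E} (hf : Integrable f) (hg : Integrable g) (ξ : V) :
    𝓕 (f + g) ξ = 𝓕 f ξ + 𝓕 g ξ :=
  congrFun (VectorFourier.fourierIntegral_add continuous_fourierChar
    (innerSL ℝ (E := V)).continuous₂ hf hg) ξ

variable [CompleteSpace E]

-- Both sides define the same tempered distribution.
theorem fourier_ae_eq_fourier_toLp (hf₁ : Integrable f) (hf₂ : MemLp f 2) :
    𝓕 f =ᵐ[volume] (𝓕 (hf₂.toLp f) : Lp E 2 (volume : Measure V)) := by
  refine ae_eq_of_integral_contDiff_smul_eq (continuous_fourier hf₁).locallyIntegrable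
    ((Lp.memLp _).locallyIntegrable one_le_two) fun g g_smooth g_cpt => ?_
  set φ : 𝓢(V, ℂ) :=
    (g_cpt.comp_left (g := Complex.ofRealCLM) rfl).toSchwartzMap
      (Complex.ofRealCLM.contDiff.comp g_smooth)
  have hφ (h : V → E) : ∫ x, g x • h x = ∫ x, φ x • h x := by
    refine integral_congr_ae (ae_of_all _ fun x => ?_)
    exact (Complex.coe_smul (g x) (h x)).symm
  calc ∫ x, g x • 𝓕 f x = ∫ x, φ x • 𝓕 f x := hφ _
    _ = ∫ x, 𝓕 φ x • f x := by
      rw [SchwartzMap.fourier_coe]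
      simpa using! (VectorFourier.integral_fourierIntegral_smul_eq_flip (L := innerₗ V)
        continuous_fourierChar (innerSL ℝ (E := V)).continuous₂ φ.integrable hf₁).symm
    _ = ∫ x, 𝓕 φ x • (hf₂.toLp f) x := by
      refine integral_congr_ae ?_
      filter_upwards [hf₂.coeFn_toLp] with x hx
      rw [hx]
    _ = 𝓕 (hf₂.toLp f : 𝓢'(V, E)) φ := by
      rw [TemperedDistribution.fourier_apply, Lp.toTemperedDistribution_apply]
    _ = ∫ x, φ x • (𝓕 (hf₂.toLp f) : Lp E 2 (volume : Measure V)) x := by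
      rw [Lp.fourier_toTemperedDistribution_eq, Lp.toTemperedDistribution_apply]
    _ = ∫ x, g x • (𝓕 (hf₂.toLp f) : Lp E 2 (volume : Measure V)) x := (hφ _).symm

theorem eLpNorm_fourier (hf₁ : Integrable f) (hf₂ : MemLp f 2) :
    eLpNorm (𝓕 f) 2 volume = eLpNorm f 2 volume := by
  rw [eLpNorm_congr_ae (fourier_ae_eq_fourier_toLp hf₁ hf₂), ← Lp.enorm_def,
    ← ofReal_norm, Lp.norm_fourier_eq, ofReal_norm, Lp.enorm_def, eLpNorm_congr_ae hf₂.coeFn_toLp]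

theorem memLp_two_fourier (hf₁ : Integrable f) (hf₂ : MemLp f 2) : MemLp (𝓕 f) 2 :=
  ⟨(continuous_fourier hf₁).aestronglyMeasurable, (eLpNorm_fourier hf₁ hf₂).trans_lt hf₂.2⟩

theorem lintegral_enorm_fourier_sq (hf₁ : Integrable f) (hf₂ : MemLp f 2) :
    ∫⁻ ξ, ‖𝓕 f ξ‖ₑ ^ 2 = ∫⁻ x, ‖f x‖ₑ ^ 2 := by
  rw [← eLpNorm_two_sq, eLpNorm_fourier hf₁ hf₂, eLpNorm_two_sq]

theorem lintegral_enorm_fourierInv_sq (hf₁ : Integrable f) (hf₂ : MemLp f 2) :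
    ∫⁻ x, ‖𝓕⁻ f x‖ₑ ^ 2 = ∫⁻ ξ, ‖f ξ‖ₑ ^ 2 := by
  simp_rw [Real.fourierInv_eq_fourier_neg]
  rw [lintegral_neg_eq_self (μ := volume) fun x => ‖𝓕 f x‖ₑ ^ 2,
    lintegral_enorm_fourier_sq hf₁ hf₂]

end Plancherel

section Hardy

open FourierTransform Module Metric
open scoped ENNReal

variable {V E : Type*} [NormedAddCommGroup V] [InnerProductSpace ℝ V] [FiniteDimensional ℝ V]
  [MeasurableSpace V] [BorelSpace V] [NormedAddCommGroup E] [InnerProductSpace ℂ E]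
  {b s : ℝ}

theorem lintegral_closedBall_inv_truncPow_norm_ne_top (hb : 0 < b) (hbV : b < finrank ℝ V) :
    ∫⁻ x in closedBall (0 : V) 1, (truncPow b ‖x‖)⁻¹ ≠ ⊤ := by
  have hV : 1 ≤ finrank ℝ V := Nat.one_le_iff_ne_zero.2 fun h => by simp [h, hb.not_gt] at hbV
  have : Nontrivial V := nontrivial_of_finrank_pos (R := ℝ) hV
  have hint : LocallyIntegrable (fun x : V => ‖x‖ ^ (-b)) volume := by
    refine locallyIntegrable_of_norm_le_rpow (C := 1) (α := b) hV hbV (ae_of_all _ fun x => ?_)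
      (measurable_norm.pow_const _).aestronglyMeasurable
    rw [one_mul, Real.norm_of_nonneg (by positivity)]
  have hae : ∀ᵐ x : V ∂volume.restrict (closedBall 0 1),
      (truncPow b ‖x‖)⁻¹ = ENNReal.ofReal (‖x‖ ^ (-b)) := by
    filter_upwards [ae_restrict_mem measurableSet_closedBall,
      ae_restrict_of_ae (compl_mem_ae_iff.2 (measure_singleton (0 : V)))] with x hx hx0
    have hx0 : 0 < ‖x‖ := norm_pos_iff.2 hx0
    rw [truncPow.of_le_one (mem_closedBall_zero_iff.1 hx), Real.rpow_neg hx0.le,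
      ENNReal.ofReal_inv_of_pos (by positivity)]
  rw [lintegral_congr_ae hae]
  exact (hint.integrableOn_isCompact (isCompact_closedBall 0 1)).lintegral_lt_top.ne

theorem enorm_fourier_indicator_sq_le {f : V → E} (hf : Integrable f) {S : Set V}
    (hS : MeasurableSet S) {w : V → ℝ≥0∞} (hw : Measurable w) (hw0 : ∀ᵐ x, w x ≠ 0)
    (hw_top : ∀ᵐ x, w x ≠ ⊤) (ξ : V) :
    ‖𝓕 (S.indicator f) ξ‖ₑ ^ 2 ≤ (∫⁻ x in S, (w x)⁻¹) * ∫⁻ x in S, w x * ‖f x‖ₑ ^ 2 := by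
  calc ‖𝓕 (S.indicator f) ξ‖ₑ ^ 2 ≤ (∫⁻ x, ‖S.indicator f x‖ₑ) ^ 2 := by
        gcongr
        exact enorm_fourier_le _ _
    _ = (∫⁻ x in S, ‖f x‖ₑ) ^ 2 := by
        simp_rw [enorm_indicator_eq_indicator_enorm]
        rw [lintegral_indicator hS]
    _ ≤ _ := sq_lintegral_le_lintegral_inv_mul_lintegral_mul_sq hw.aemeasurable
        (ae_restrict_of_ae hw0) (ae_restrict_of_ae hw_top) hf.1.enorm.restrict

theorem volume_ball_mul_lintegral_closedBall_inv_truncPow (b : ℝ) {r : ℝ} (hr : 0 < r) :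
    volume (ball (0 : V) r) * ∫⁻ x in closedBall (0 : V) r⁻¹, (truncPow b (r * ‖x‖))⁻¹ =
      volume (ball (0 : V) 1) * ∫⁻ x in closedBall (0 : V) 1, (truncPow b ‖x‖)⁻¹ := by
  have dilate (x : V) : (closedBall (0 : V) r⁻¹).indicator (fun x => (truncPow b (r * ‖x‖))⁻¹) x =
      (closedBall (0 : V) 1).indicator (fun x => (truncPow b ‖x‖)⁻¹) (r • x) := by
    simp only [Set.indicator, mem_closedBall_zero_iff, norm_smul, Real.norm_of_nonneg hr.le,
      ← le_inv_mul_iff₀ hr, mul_one]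
  have cancel : ENNReal.ofReal (r ^ finrank ℝ V) * ENNReal.ofReal (r ^ finrank ℝ V)⁻¹ = 1 := by
    rw [← ENNReal.ofReal_mul (by positivity), mul_inv_cancel₀ (by positivity), ENNReal.ofReal_one]
  rw [← lintegral_indicator measurableSet_closedBall,
    ← lintegral_indicator measurableSet_closedBall, lintegral_congr dilate,
    lintegral_comp_smul_addHaar _ _ hr.ne', abs_of_pos (by positivity),
    Measure.addHaar_ball_of_pos _ _ hr, mul_mul_mul_comm, cancel, one_mul]

theorem lintegral_indicator_Ioi_mul_le_setLIntegral_ball (g : V → ℝ≥0∞) {r : ℝ} :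
    ∫⁻ ξ, (Set.Ioi (1 : ℝ)).indicator 1 (r * ‖ξ‖⁻¹) * g ξ ≤ ∫⁻ ξ in ball (0 : V) r, g ξ := by
  rw [← lintegral_indicator measurableSet_ball]
  refine lintegral_mono fun ξ => ?_
  by_cases hξ : r * ‖ξ‖⁻¹ ∈ Set.Ioi 1
  · have hξ0 : 0 < ‖ξ‖ := norm_pos_iff.2 fun h => by simp [h, zero_le_one.not_gt] at hξ
    have hξr : ξ ∈ ball (0 : V) r := by simpa [← div_eq_mul_inv, one_lt_div hξ0] using hξ
    simp [hξ, hξr]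
  · simp [hξ]

variable [CompleteSpace E]

-- The part of `f` on `S` has a bounded Fourier transform by the weighted Cauchy-Schwarz inequality;
-- the rest is controlled by Plancherel's theorem.
theorem setLIntegral_enorm_fourier_sq_le {f : V → E} (hf₁ : Integrable f) (hf₂ : MemLp f 2)
    (T : Set V) {S : Set V} (hS : MeasurableSet S) {w : V → ℝ≥0∞} (hw : Measurable w)
    (hw0 : ∀ᵐ x, w x ≠ 0) (hw_top : ∀ᵐ x, w x ≠ ⊤) (hwS : ∀ x ∈ Sᶜ, 1 ≤ w x) :
    ∫⁻ ξ in T, ‖𝓕 f ξ‖ₑ ^ 2 ≤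
      2 * (volume T * (∫⁻ x in S, (w x)⁻¹) + 1) * ∫⁻ x, w x * ‖f x‖ₑ ^ 2 := by
  set I : ℝ≥0∞ := ∫⁻ x, w x * ‖f x‖ₑ ^ 2
  have near (ξ : V) : ‖𝓕 (S.indicator f) ξ‖ₑ ^ 2 ≤ (∫⁻ x in S, (w x)⁻¹) * I :=
    (enorm_fourier_indicator_sq_le hf₁ hS hw hw0 hw_top ξ).trans
      (by gcongr; exact setLIntegral_le_lintegral _ _)
  have far : ∫⁻ ξ in T, ‖𝓕 (Sᶜ.indicator f) ξ‖ₑ ^ 2 ≤ I := by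
    refine (setLIntegral_le_lintegral _ _).trans ?_
    rw [lintegral_enorm_fourier_sq (hf₁.indicator hS.compl) (hf₂.indicator hS.compl)]
    refine lintegral_mono fun x => ?_
    by_cases hx : x ∈ Sᶜ
    · rw [Set.indicator_of_mem hx]
      exact le_mul_of_one_le_left' (hwS x hx)
    · simp [Set.indicator_of_notMem hx]
  have split (ξ : V) : ‖𝓕 f ξ‖ₑ ^ 2 ≤
      2 * ‖𝓕 (S.indicator f) ξ‖ₑ ^ 2 + 2 * ‖𝓕 (Sᶜ.indicator f) ξ‖ₑ ^ 2 := by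
    conv_lhs => rw [← Set.indicator_self_add_compl S f]
    rw [fourier_add_apply (hf₁.indicator hS) (hf₁.indicator hS.compl)]
    exact enorm_add_sq_le _ _
  calc ∫⁻ ξ in T, ‖𝓕 f ξ‖ₑ ^ 2
      ≤ ∫⁻ ξ in T, (2 * ((∫⁻ x in S, (w x)⁻¹) * I) + 2 * ‖𝓕 (Sᶜ.indicator f) ξ‖ₑ ^ 2) :=
        lintegral_mono fun ξ => (split ξ).trans (by gcongr; exact near ξ)
    _ = 2 * ((∫⁻ x in S, (w x)⁻¹) * I) * volume T +
          2 * ∫⁻ ξ in T, ‖𝓕 (Sᶜ.indicator f) ξ‖ₑ ^ 2 := by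
        rw [lintegral_add_left measurable_const, setLIntegral_const,
          lintegral_const_mul' _ _ ENNReal.ofNat_ne_top]
    _ ≤ 2 * ((∫⁻ x in S, (w x)⁻¹) * I) * volume T + 2 * I := by gcongr
    _ = 2 * (volume T * (∫⁻ x in S, (w x)⁻¹) + 1) * I := by ring

theorem exists_lintegral_ball_enorm_fourier_sq_le (hb : 0 < b) (hbV : b < finrank ℝ V) :
    ∃ C : ℝ≥0∞, C ≠ ⊤ ∧ ∀ f : V → E, Integrable f → MemLp f 2 → ∀ r > 0,
      ∫⁻ ξ in ball (0 : V) r, ‖𝓕 f ξ‖ₑ ^ 2 ≤ C * ∫⁻ x, truncPow b (r * ‖x‖) * ‖f x‖ₑ ^ 2 := by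
  have : Nontrivial V := nontrivial_of_finrank_pos (R := ℝ) (by exact_mod_cast hb.trans hbV)
  have hK : volume (ball (0 : V) 1) * ∫⁻ x in closedBall (0 : V) 1, (truncPow b ‖x‖)⁻¹ ≠ ⊤ :=
    ENNReal.mul_ne_top measure_ball_lt_top.ne
      (lintegral_closedBall_inv_truncPow_norm_ne_top hb hbV)
  refine ⟨2 * (_ + 1), ENNReal.mul_ne_top ENNReal.ofNat_ne_top
    (ENNReal.add_ne_top.2 ⟨hK, ENNReal.one_ne_top⟩), fun f hf₁ hf₂ r hr => ?_⟩
  rw [← volume_ball_mul_lintegral_closedBall_inv_truncPow b hr]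
  refine setLIntegral_enorm_fourier_sq_le hf₁ hf₂ _ measurableSet_closedBall (by fun_prop) ?_
    (ae_of_all _ fun _ => ENNReal.ofReal_ne_top) fun x hx => ?_
  · filter_upwards [compl_mem_ae_iff.2 (measure_singleton (0 : V))] with x hx
    have : 0 < ‖x‖ := norm_pos_iff.2 hx
    exact (ENNReal.ofReal_pos.2 (by positivity)).ne'
  · have hx : r⁻¹ < ‖x‖ := by simpa using hx
    exact (truncPow.of_one_le ((inv_le_iff_one_le_mul₀' hr).1 hx.le)).ge

-- Integrate the previous bound over all radii against `mellinMeasure s`.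
theorem exists_lintegral_hardy_fourier_le (hs : 0 < s) (hsV : s < finrank ℝ V) :
    ∃ C : ℝ≥0∞, C ≠ ⊤ ∧ ∀ f : V → E, Integrable f → MemLp f 2 →
      ∫⁻ ξ, ENNReal.ofReal (‖ξ‖⁻¹ ^ s) * ‖𝓕 f ξ‖ₑ ^ 2 ≤
        C * ∫⁻ x, ENNReal.ofReal (‖x‖ ^ s) * ‖f x‖ₑ ^ 2 := by
  obtain ⟨b, hsb, hbV⟩ := exists_between hsV
  have hb : 0 < b := hs.trans hsb
  obtain ⟨K, hK, hball⟩ := exists_lintegral_ball_enorm_fourier_sq_le (E := E) hb hbV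
  set φ : ℝ → ℝ≥0∞ := (Set.Ioi 1).indicator 1
  have hφ : Measurable φ := measurable_one.indicator measurableSet_Ioi
  have hφ_le (t : ℝ) : φ t ≤ truncPow b t := by
    refine Set.indicator_le' (fun t ht => ?_) (fun _ _ => zero_le) t
    rw [truncPow.of_one_le (le_of_lt ht), Pi.one_apply]
  set c := ∫⁻ t, φ t ∂mellinMeasure s
  set c' := ∫⁻ t, truncPow b t ∂mellinMeasure s
  have hc' : c' ≠ ⊤ := truncPow.lintegral_mellinMeasure_ne_top hs hsb
  have hc : c ≠ ⊤ := ne_top_of_le_ne_top hc' (lintegral_mono hφ_le)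
  have hc0 : c ≠ 0 := lintegral_mellinMeasure_ne_zero hφ zero_le_one one_lt_two fun t ht => by
    simp [φ, ht.1]
  refine ⟨c⁻¹ * (K * c'), by finiteness, fun f hf₁ hf₂ => ?_⟩
  have hf : AEMeasurable fun x => ‖f x‖ₑ ^ 2 := hf₁.1.enorm.pow_const 2
  rw [mul_assoc, ← ENNReal.mul_le_iff_le_inv hc0 hc,
    ← lintegral_mellinMeasure_lintegral_comp_mul hφ (by simp [φ]) hs.ne' (by fun_prop)
    (fun ξ => by positivity) ((continuous_fourier hf₁).enorm.measurable.pow_const 2).aemeasurable,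
    mul_assoc K, ← lintegral_mellinMeasure_lintegral_comp_mul (truncPow.measurable b)
    (truncPow.zero_right hb.ne') hs.ne' measurable_norm (fun x => norm_nonneg x) hf,
    ← lintegral_const_mul' _ _ hK]
  exact lintegral_mellinMeasure_mono fun r hr =>
    (lintegral_indicator_Ioi_mul_le_setLIntegral_ball _).trans (hball f hf₁ hf₂ r hr)

end Hardy

section ScaleLipschitz

open Metric
open scoped NNReal

variable {V F : Type*} [NormedAddCommGroup V] [NormedAddCommGroup F]
  {q : V → F} {M : ℝ}

/-- The first-order symbol estimates `|q(ξ)| ≤ M` and `|q(η) - q(ξ)| ≤ M |η - ξ| / |ξ|`, a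
scale-invariant class containing the regular symbols that are homogeneous of degree zero. The second
estimate is multiplied by `|ξ|` so that it is vacuous at `ξ = 0`. -/
structure IsScaleLipschitz (M : ℝ) (q : V → F) : Prop where
  norm_le : ∀ ξ, ‖q ξ‖ ≤ M
  norm_mul_norm_sub_le : ∀ ξ η, ‖ξ‖ * ‖q η - q ξ‖ ≤ M * ‖η - ξ‖

namespace IsScaleLipschitz

theorem nonneg (hq : IsScaleLipschitz M q) : 0 ≤ M := (norm_nonneg _).trans (hq.norm_le 0)

theorem enorm_le (hq : IsScaleLipschitz M q) (ξ : V) : ‖q ξ‖ₑ ≤ ENNReal.ofReal M := by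
  rw [← ofReal_norm]
  exact ENNReal.ofReal_le_ofReal (hq.norm_le ξ)

theorem norm_add_sub_le (hq : IsScaleLipschitz M q) {ξ : V} (hξ : ξ ≠ 0) (h : V) :
    ‖q (ξ + h) - q ξ‖ ≤ 2 * M * min 1 (‖h‖ * ‖ξ‖⁻¹) := by
  have hM := hq.nonneg
  have bounded : ‖q (ξ + h) - q ξ‖ ≤ 2 * M :=
    (norm_sub_le _ _).trans (by linarith [hq.norm_le (ξ + h), hq.norm_le ξ])
  have lipschitz : ‖q (ξ + h) - q ξ‖ ≤ M * (‖h‖ * ‖ξ‖⁻¹) := by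
    rw [← mul_assoc, ← div_eq_mul_inv, le_div_iff₀' (norm_pos_iff.2 hξ)]
    simpa using hq.norm_mul_norm_sub_le ξ (ξ + h)
  rw [mul_min_of_nonneg _ _ (by positivity), mul_one]
  exact le_min bounded (lipschitz.trans (by gcongr; linarith))

theorem enorm_add_sub_sq_le (hq : IsScaleLipschitz M q) {ξ : V} (hξ : ξ ≠ 0) (h : V) :
    ‖q (ξ + h) - q ξ‖ₑ ^ 2 ≤ ENNReal.ofReal (4 * M ^ 2) * truncPow 2 (‖h‖ * ‖ξ‖⁻¹) := by
  rw [truncPow.two_eq, ← ENNReal.ofReal_mul (by positivity), ← ofReal_norm,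
    ← ENNReal.ofReal_pow (norm_nonneg _)]
  refine ENNReal.ofReal_le_ofReal ?_
  calc ‖q (ξ + h) - q ξ‖ ^ 2 ≤ (2 * M * min 1 (‖h‖ * ‖ξ‖⁻¹)) ^ 2 := by
        gcongr
        exact hq.norm_add_sub_le hξ h
    _ = _ := by ring

theorem enorm_smul_add_sub_sq_le {𝕜 E : Type*} [NormedField 𝕜] [NormedAddCommGroup E]
    [NormedSpace 𝕜 E] {q : V → 𝕜} (hq : IsScaleLipschitz M q) (g : V → E) {ξ : V} (hξ : ξ ≠ 0)
    (h : V) :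
    ‖q (ξ + h) • g (ξ + h) - q ξ • g ξ‖ₑ ^ 2 ≤
      2 * ENNReal.ofReal M ^ 2 * ‖g (ξ + h) - g ξ‖ₑ ^ 2 +
        2 * ENNReal.ofReal (4 * M ^ 2) * (truncPow 2 (‖h‖ * ‖ξ‖⁻¹) * ‖g ξ‖ₑ ^ 2) := by
  have leibniz : q (ξ + h) • g (ξ + h) - q ξ • g ξ =
      q (ξ + h) • (g (ξ + h) - g ξ) + (q (ξ + h) - q ξ) • g ξ := by
    rw [smul_sub, sub_smul]
    abel
  rw [leibniz]
  refine (enorm_add_sq_le _ _).trans ?_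
  rw [enorm_smul, enorm_smul, mul_pow, mul_pow, mul_assoc, mul_assoc,
    ← mul_assoc (ENNReal.ofReal _)]
  gcongr
  · exact hq.enorm_le _
  · exact hq.enorm_add_sub_sq_le hξ h

theorem continuousAt (hq : IsScaleLipschitz M q) {ξ : V} (hξ : ξ ≠ 0) : ContinuousAt q ξ := by
  refine continuousAt_of_locally_lipschitz one_pos (M * ‖ξ‖⁻¹) fun η _ => ?_
  rw [dist_eq_norm, dist_eq_norm, mul_right_comm, ← div_eq_mul_inv,
    le_div_iff₀' (norm_pos_iff.2 hξ)]
  exact hq.norm_mul_norm_sub_le ξ η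

theorem measurable [MeasurableSpace V] [BorelSpace V] [MeasurableSpace F] [BorelSpace F]
    (hq : IsScaleLipschitz M q) : Measurable q :=
  measurable_of_continuousOn_compl_singleton 0 fun _ hξ => (hq.continuousAt hξ).continuousWithinAt

end IsScaleLipschitz

variable [NormedSpace ℝ V]

theorem IsScaleLipschitz.comp_smul (hq : IsScaleLipschitz M q) {c : ℝ} (hc : c ≠ 0) :
    IsScaleLipschitz M fun ξ => q (c • ξ) where
  norm_le ξ := hq.norm_le _
  norm_mul_norm_sub_le ξ η := by
    have h := hq.norm_mul_norm_sub_le (c • ξ) (c • η)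
    rw [← smul_sub, norm_smul, norm_smul, mul_assoc, mul_left_comm M] at h
    exact le_of_mul_le_mul_left h (norm_pos_iff.2 hc)

theorem norm_mul_norm_inv_smul_sub_inv_smul_le {ξ η : V} (hξ : ξ ≠ 0) (hη : η ≠ 0) :
    ‖ξ‖ * ‖‖η‖⁻¹ • η - ‖ξ‖⁻¹ • ξ‖ ≤ 2 * ‖η - ξ‖ := by
  have h : ‖ξ‖ • (‖η‖⁻¹ • η - ‖ξ‖⁻¹ • ξ) = (‖ξ‖ - ‖η‖) • ‖η‖⁻¹ • η + (η - ξ) := by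
    rw [smul_sub, sub_smul, smul_inv_smul₀ (norm_ne_zero_iff.2 hξ),
      smul_inv_smul₀ (norm_ne_zero_iff.2 hη)]
    abel
  calc ‖ξ‖ * ‖‖η‖⁻¹ • η - ‖ξ‖⁻¹ • ξ‖ = ‖(‖ξ‖ - ‖η‖) • ‖η‖⁻¹ • η + (η - ξ)‖ := by
        rw [← h, norm_smul, norm_norm]
    _ ≤ ‖(‖ξ‖ - ‖η‖) • ‖η‖⁻¹ • η‖ + ‖η - ξ‖ := norm_add_le _ _
    _ = |‖ξ‖ - ‖η‖| + ‖η - ξ‖ := by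
        rw [norm_smul, norm_smul, norm_inv, norm_norm, inv_mul_cancel₀ (norm_ne_zero_iff.2 hη),
          mul_one, Real.norm_eq_abs]
    _ ≤ 2 * ‖η - ξ‖ := by linarith [norm_sub_rev ξ η, abs_norm_sub_norm_le ξ η]

theorem isScaleLipschitz_of_lipschitzOnWith_sphere (hq_hom : ∀ t : ℝ, 0 < t → ∀ ξ, q (t • ξ) = q ξ)
    {K : ℝ≥0} (hK : LipschitzOnWith K q (sphere 0 1)) {B : ℝ} (hB : ∀ ξ, ‖q ξ‖ ≤ B) :
    IsScaleLipschitz (2 * K + 2 * B) q := by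
  have hB0 : 0 ≤ B := (norm_nonneg _).trans (hB 0)
  have normalize_mem {ξ : V} (hξ : ξ ≠ 0) : ‖ξ‖⁻¹ • ξ ∈ sphere (0 : V) 1 := by
    rw [mem_sphere_zero_iff_norm, norm_smul, norm_inv, norm_norm,
      inv_mul_cancel₀ (norm_ne_zero_iff.2 hξ)]
  refine ⟨fun ξ => (hB ξ).trans (by linarith [K.2]), fun ξ η => ?_⟩
  rcases eq_or_ne ξ 0 with rfl | hξ
  · rw [norm_zero, zero_mul]
    positivity
  rcases eq_or_ne η 0 with rfl | hη
  · have h : ‖q 0 - q ξ‖ ≤ 2 * K + 2 * B :=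
      (norm_sub_le _ _).trans (by linarith [hB 0, hB ξ, K.2])
    rw [zero_sub, norm_neg, mul_comm]
    gcongr
  calc ‖ξ‖ * ‖q η - q ξ‖ = ‖ξ‖ * ‖q (‖η‖⁻¹ • η) - q (‖ξ‖⁻¹ • ξ)‖ := by
        rw [hq_hom _ (by positivity), hq_hom _ (by positivity)]
    _ ≤ ‖ξ‖ * (K * ‖‖η‖⁻¹ • η - ‖ξ‖⁻¹ • ξ‖) := by
        gcongr
        exact hK.norm_sub_le (normalize_mem hη) (normalize_mem hξ)
    _ = K * (‖ξ‖ * ‖‖η‖⁻¹ • η - ‖ξ‖⁻¹ • ξ‖) := by ring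
    _ ≤ K * (2 * ‖η - ξ‖) :=
        mul_le_mul_of_nonneg_left (norm_mul_norm_inv_smul_sub_inv_smul_le hξ hη) K.2
    _ ≤ (2 * K + 2 * B) * ‖η - ξ‖ := by nlinarith [norm_nonneg (η - ξ)]

variable [FiniteDimensional ℝ V]

theorem exists_forall_norm_le_of_homogeneous (hq : ContinuousOn q {0}ᶜ)
    (hq_hom : ∀ t : ℝ, 0 < t → ∀ ξ, q (t • ξ) = q ξ) : ∃ B, ∀ ξ, ‖q ξ‖ ≤ B := by
  obtain ⟨B, hB⟩ := (isCompact_sphere (0 : V) 1).exists_bound_of_continuousOn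
    (hq.mono fun ξ hξ => ne_zero_of_mem_unit_sphere ⟨ξ, hξ⟩)
  refine ⟨max B ‖q 0‖, fun ξ => ?_⟩
  rcases eq_or_ne ξ 0 with rfl | hξ
  · exact le_max_right _ _
  · rw [← hq_hom ‖ξ‖⁻¹ (by positivity) ξ]
    refine (hB _ ?_).trans (le_max_left _ _)
    rw [mem_sphere_zero_iff_norm, norm_smul, norm_inv, norm_norm,
      inv_mul_cancel₀ (norm_ne_zero_iff.2 hξ)]

theorem exists_isScaleLipschitz_of_homogeneous [NormedSpace ℝ F] (hq : ContDiffOn ℝ 1 q {0}ᶜ)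
    (hq_hom : ∀ t : ℝ, 0 < t → ∀ ξ, q (t • ξ) = q ξ) : ∃ M, IsScaleLipschitz M q := by
  obtain ⟨B, hB⟩ := exists_forall_norm_le_of_homogeneous hq.continuousOn hq_hom
  obtain ⟨K, hK⟩ := LocallyLipschitzOn.exists_lipschitzOnWith_of_compact
    (isCompact_sphere (0 : V) 1) fun ξ hξ => by
      have hξ0 : ξ ∈ ({0} : Set V)ᶜ := ne_zero_of_mem_unit_sphere ⟨ξ, hξ⟩
      obtain ⟨K, t, ht, hK⟩ :=
        (hq.contDiffAt (isOpen_compl_singleton.mem_nhds hξ0)).exists_lipschitzOnWith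
      exact ⟨K, t, mem_nhdsWithin_of_mem_nhds ht, hK⟩
  exact ⟨_, isScaleLipschitz_of_lipschitzOnWith_sphere hq_hom hK hB⟩

end ScaleLipschitz

section CharDiff

open FourierTransform Filter
open scoped ENNReal Topology

/-- The squared modulus `|e ^ (2πit) - 1| ^ 2`, the factor that a difference of step `h` on the
Fourier side puts in front of `‖f x‖ ^ 2` for `t = ⟪x, h⟫`. -/
def charDiffSq (t : ℝ) : ℝ≥0∞ := ‖(𝐞 t : ℂ) - 1‖ₑ ^ 2

namespace charDiffSq

theorem eq_sin_sq (t : ℝ) : charDiffSq t = ENNReal.ofReal ((2 * Real.sin (π * t)) ^ 2) := by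
  have h : (𝐞 t : ℂ) = Complex.exp (Complex.I * (2 * π * t : ℝ)) := by
    rw [Real.fourierChar_apply, mul_comm]
  rw [charDiffSq, h, ← ofReal_norm, Complex.norm_exp_I_mul_ofReal_sub_one,
    ← ENNReal.ofReal_pow (norm_nonneg _), Real.norm_eq_abs, sq_abs]
  ring_nf

@[fun_prop]
theorem measurable : Measurable charDiffSq := by
  unfold charDiffSq
  fun_prop

theorem zero_right : charDiffSq 0 = 0 := by simp [charDiffSq]

theorem neg_right (t : ℝ) : charDiffSq (-t) = charDiffSq t := by
  simp [eq_sin_sq]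

theorem abs_right (t : ℝ) : charDiffSq |t| = charDiffSq t := by
  rcases abs_choice t with h | h <;> simp [h, neg_right]

theorem ne_zero {t : ℝ} (ht : t ∈ Set.Ioo 0 1) : charDiffSq t ≠ 0 := by
  have hsin : 0 < Real.sin (π * t) :=
    Real.sin_pos_of_pos_of_lt_pi (mul_pos pi_pos ht.1) (mul_lt_of_lt_one_right pi_pos ht.2)
  rw [eq_sin_sq]
  exact (ENNReal.ofReal_pos.2 (by positivity)).ne'

theorem le_truncPow {t : ℝ} (ht : 0 ≤ t) :
    charDiffSq t ≤ ENNReal.ofReal ((2 * π) ^ 2) * truncPow 2 t := by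
  have one_le_pi : 1 ≤ π := by linarith [pi_gt_three]
  have bounded : |Real.sin (π * t)| ≤ π := (Real.abs_sin_le_one _).trans one_le_pi
  have linear : |Real.sin (π * t)| ≤ π * t := by
    simpa [abs_of_nonneg (mul_nonneg pi_pos.le ht)] using Real.abs_sin_le_abs (x := π * t)
  have hsin : |Real.sin (π * t)| ≤ π * min 1 t := by
    rw [mul_min_of_nonneg _ _ pi_pos.le, mul_one]
    exact le_min bounded linear
  rw [eq_sin_sq, truncPow.two_eq, ← ENNReal.ofReal_mul (by positivity), ← mul_pow, ← sq_abs,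
    abs_mul, abs_two, mul_assoc]
  gcongr

theorem lintegral_mellinMeasure_ne_zero (s : ℝ) : ∫⁻ t, charDiffSq t ∂mellinMeasure s ≠ 0 :=
  _root_.lintegral_mellinMeasure_ne_zero measurable le_rfl one_pos fun _ ht => ne_zero ht

theorem lintegral_mellinMeasure_ne_top {s : ℝ} (hs : 0 < s) (hs2 : s < 2) :
    ∫⁻ t, charDiffSq t ∂mellinMeasure s ≠ ⊤ := by
  refine ne_top_of_le_ne_top ?_ (lintegral_mellinMeasure_mono fun t ht => le_truncPow ht.le)
  rw [lintegral_const_mul' _ _ ENNReal.ofReal_ne_top]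
  exact ENNReal.mul_ne_top ENNReal.ofReal_ne_top (truncPow.lintegral_mellinMeasure_ne_top hs hs2)

theorem tendsto_mul_sq (a : ℝ) :
    Tendsto (fun k : ℕ => ENNReal.ofReal (((k : ℝ) + 1) ^ 2) * charDiffSq (((k : ℝ) + 1)⁻¹ * a))
      atTop (𝓝 (ENNReal.ofReal ((2 * π) ^ 2) * ENNReal.ofReal (a ^ 2))) := by
  have deriv_zero : HasDerivAt (fun t : ℝ => 2 * Real.sin (π * (t * a))) (2 * π * a) 0 := by
    simpa [mul_assoc] using
      ((((hasDerivAt_id (0 : ℝ)).mul_const a).const_mul π).sin).const_mul 2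
  have steps : Tendsto (fun k : ℕ => ((k : ℝ) + 1)⁻¹) atTop (𝓝[>] 0) :=
    tendsto_nhdsWithin_iff.2 ⟨by simpa using tendsto_one_div_add_atTop_nhds_zero_nat (𝕜 := ℝ),
      Eventually.of_forall fun k => Set.mem_Ioi.2 (by positivity)⟩
  rw [← ENNReal.ofReal_mul (by positivity), ← mul_pow]
  refine (ENNReal.tendsto_ofReal ((deriv_zero.tendsto_slope_zero_right.comp steps).pow 2)).congr
    fun k => ?_
  rw [eq_sin_sq, ← ENNReal.ofReal_mul (by positivity)]
  simp [mul_pow]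

end charDiffSq

variable {V E : Type*} [NormedAddCommGroup V] [InnerProductSpace ℝ V] [FiniteDimensional ℝ V]
  [MeasurableSpace V] [BorelSpace V] [NormedAddCommGroup E] [InnerProductSpace ℂ E]
  {f : V → E}

theorem enorm_fourierChar_smul_sub_sq (t : ℝ) (v : E) :
    ‖𝐞 t • v - v‖ₑ ^ 2 = charDiffSq t * ‖v‖ₑ ^ 2 := by
  have h : 𝐞 t • v - v = ((𝐞 t : ℂ) - 1) • v := by rw [sub_smul, one_smul, Circle.smul_def]
  rw [h, enorm_smul, mul_pow, charDiffSq]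

theorem fourier_add_sub_fourier (hf : Integrable f) (ξ h : V) :
    𝓕 f (ξ + h) - 𝓕 f ξ = 𝓕 (fun x => 𝐞 (-⟪x, h⟫) • f x - f x) ξ := by
  have integrable_char (ξ : V) : Integrable fun x => 𝐞 (-⟪x, ξ⟫) • f x :=
    (Real.fourierIntegral_convergent_iff ξ).2 hf
  simp_rw [Real.fourier_eq]
  rw [← integral_sub (integrable_char _) (integrable_char _)]
  refine integral_congr_ae (ae_of_all _ fun x => ?_)
  simp only [smul_sub, inner_add_right, neg_add, AddChar.map_add_eq_mul, mul_smul]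

theorem fourierInv_comp_add_sub (hf : Integrable f) (h x : V) :
    𝓕⁻ (fun ξ => f (ξ + h) - f ξ) x = 𝐞 (-⟪h, x⟫) • 𝓕⁻ f x - 𝓕⁻ f x := by
  have integrable_char {g : V → E} (hg : Integrable g) : Integrable fun ξ => 𝐞 ⟪ξ, x⟫ • g ξ := by
    simpa using (Real.fourierIntegral_convergent_iff (-x)).2 hg
  have translate : ∫ ξ, 𝐞 ⟪ξ, x⟫ • f (ξ + h) = 𝐞 (-⟪h, x⟫) • ∫ ξ, 𝐞 ⟪ξ, x⟫ • f ξ := by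
    simpa [VectorFourier.fourierIntegral, Function.comp_def] using congrFun
      (VectorFourier.fourierIntegral_comp_add_right 𝐞 volume (-innerₗ V) f h) x
  simp_rw [Real.fourierInv_eq, smul_sub]
  rw [integral_sub (integrable_char (hf.comp_add_right h)) (integrable_char hf), translate]

variable [CompleteSpace E]

theorem lintegral_charDiffSq_mul_enorm_sq (hf₁ : Integrable f) (hf₂ : MemLp f 2) (h : V) :
    ∫⁻ x, charDiffSq ⟪h, x⟫ * ‖f x‖ₑ ^ 2 = ∫⁻ ξ, ‖𝓕 f (ξ + h) - 𝓕 f ξ‖ₑ ^ 2 := by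
  have hm : AEStronglyMeasurable fun x => 𝐞 (-⟪x, h⟫) • f x :=
    ((Real.fourierIntegral_convergent_iff h).2 hf₁).1
  have hg₁ : Integrable fun x => 𝐞 (-⟪x, h⟫) • f x - f x :=
    ((Real.fourierIntegral_convergent_iff h).2 hf₁).sub hf₁
  have hg₂ : MemLp (fun x => 𝐞 (-⟪x, h⟫) • f x - f x) 2 :=
    (hf₂.congr_norm hm (ae_of_all _ fun x => (Circle.norm_smul _ _).symm)).sub hf₂
  simp_rw [fourier_add_sub_fourier hf₁]
  rw [lintegral_enorm_fourier_sq hg₁ hg₂]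
  simp_rw [enorm_fourierChar_smul_sub_sq, charDiffSq.neg_right, real_inner_comm h]

theorem lintegral_charDiffSq_mul_enorm_fourierInv_sq (hf₁ : Integrable f) (hf₂ : MemLp f 2)
    (h : V) :
    ∫⁻ x, charDiffSq ⟪h, x⟫ * ‖𝓕⁻ f x‖ₑ ^ 2 = ∫⁻ ξ, ‖f (ξ + h) - f ξ‖ₑ ^ 2 := by
  have hf₂_add : MemLp (fun ξ => f (ξ + h)) 2 :=
    hf₂.comp_measurePreserving (measurePreserving_add_right volume h)
  refine Eq.trans ?_
    (lintegral_enorm_fourierInv_sq ((hf₁.comp_add_right h).sub hf₁) (hf₂_add.sub hf₂))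
  simp_rw [fourierInv_comp_add_sub hf₁, enorm_fourierChar_smul_sub_sq, charDiffSq.neg_right]

end CharDiff

section DifferenceToWeight

open Filter
open scoped ENNReal Topology

variable {α β : Type*} [MeasurableSpace α] [MeasurableSpace β] {μ : Measure α} {ν : Measure β}
  {a : α → ℝ} {b : β → ℝ} {u v : α → ℝ≥0∞} {w : β → ℝ≥0∞} {s : ℝ}

theorem lintegral_charDiffSq_mul_lintegral_rpow_le [SFinite μ] [SFinite ν] (hs : s ≠ 0)
    (ha : Measurable a) (ha0 : ∀ x, 0 ≤ a x) (hb : Measurable b) (hb0 : ∀ y, 0 ≤ b y)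
    (hu : AEMeasurable u μ) (hv : AEMeasurable v μ) (hw : AEMeasurable w ν)
    (h : ∀ t > 0, ∫⁻ x, charDiffSq (t * a x) * u x ∂μ ≤
      ∫⁻ x, truncPow 2 (t * a x) * v x ∂μ + ∫⁻ y, truncPow 2 (t * b y) * w y ∂ν) :
    (∫⁻ t, charDiffSq t ∂mellinMeasure s) * ∫⁻ x, ENNReal.ofReal (a x ^ s) * u x ∂μ ≤
      (∫⁻ t, truncPow 2 t ∂mellinMeasure s) *
        (∫⁻ x, ENNReal.ofReal (a x ^ s) * v x ∂μ + ∫⁻ y, ENNReal.ofReal (b y ^ s) * w y ∂ν) := by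
  have hτ := truncPow.measurable 2
  have hτ0 := truncPow.zero_right two_ne_zero
  have hm : AEMeasurable (fun p : ℝ × α => truncPow 2 (p.1 * a p.2) * v p.2)
      ((mellinMeasure s).prod μ) :=
    AEMeasurable.mul (by fun_prop) hv.comp_snd
  rw [mul_add, ← lintegral_mellinMeasure_lintegral_comp_mul charDiffSq.measurable
      charDiffSq.zero_right hs ha ha0 hu,
    ← lintegral_mellinMeasure_lintegral_comp_mul hτ hτ0 hs ha ha0 hv,
    ← lintegral_mellinMeasure_lintegral_comp_mul hτ hτ0 hs hb hb0 hw,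
    ← lintegral_add_left' hm.lintegral_prod_right']
  exact lintegral_mellinMeasure_mono h

theorem lintegral_mul_truncPow_inv_mul_le (hb0 : ∀ y, 0 ≤ b y) {r : ℝ} (hr : 0 < r) :
    ENNReal.ofReal (r ^ 2) * ∫⁻ y, truncPow 2 (r⁻¹ * b y) * w y ∂ν ≤
      ∫⁻ y, ENNReal.ofReal (b y ^ 2) * w y ∂ν := by
  rw [← lintegral_const_mul' _ _ ENNReal.ofReal_ne_top]
  refine lintegral_mono fun y => ?_
  rw [← mul_assoc]
  gcongr
  calc ENNReal.ofReal (r ^ 2) * truncPow 2 (r⁻¹ * b y)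
      ≤ ENNReal.ofReal (r ^ 2) * ENNReal.ofReal ((r⁻¹ * b y) ^ (2 : ℝ)) := by
        gcongr
        exact truncPow.le_rpow zero_le_two (mul_nonneg (inv_nonneg.2 hr.le) (hb0 y))
    _ = ENNReal.ofReal (b y ^ 2) := by
        rw [← ENNReal.ofReal_mul (by positivity), Real.rpow_two]
        field_simp

-- The endpoint `s = 2`, where `truncPow 2` is not integrable: divide the differences by the square
-- of the step and pass to the limit with Fatou's lemma.
theorem lintegral_sq_le_of_lintegral_charDiffSq_le (ha : Measurable a) (ha0 : ∀ x, 0 ≤ a x)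
    (hb0 : ∀ y, 0 ≤ b y) (hu : AEMeasurable u μ)
    (h : ∀ t > 0, ∫⁻ x, charDiffSq (t * a x) * u x ∂μ ≤
      ∫⁻ x, truncPow 2 (t * a x) * v x ∂μ + ∫⁻ y, truncPow 2 (t * b y) * w y ∂ν) :
    ENNReal.ofReal ((2 * π) ^ 2) * ∫⁻ x, ENNReal.ofReal (a x ^ 2) * u x ∂μ ≤
      ∫⁻ x, ENNReal.ofReal (a x ^ 2) * v x ∂μ + ∫⁻ y, ENNReal.ofReal (b y ^ 2) * w y ∂ν := by
  set D : ℕ → α → ℝ≥0∞ := fun k x =>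
    ENNReal.ofReal (((k : ℝ) + 1) ^ 2) * charDiffSq (((k : ℝ) + 1)⁻¹ * a x) * u x
  have D_tendsto (x : α) : Tendsto (D · x) atTop
      (𝓝 (ENNReal.ofReal ((2 * π) ^ 2) * ENNReal.ofReal (a x ^ 2) * u x)) := by
    rcases (ha0 x).eq_or_lt with hx | hx
    · simp [D, ← hx, charDiffSq.zero_right]
    · exact ENNReal.Tendsto.mul_const (charDiffSq.tendsto_mul_sq (a x))
        (Or.inl (by simp [hx.ne']))
  have D_le (k : ℕ) : ∫⁻ x, D k x ∂μ ≤
      ∫⁻ x, ENNReal.ofReal (a x ^ 2) * v x ∂μ + ∫⁻ y, ENNReal.ofReal (b y ^ 2) * w y ∂ν := by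
    have hk : (0 : ℝ) < k + 1 := by positivity
    simp only [D, mul_assoc]
    rw [lintegral_const_mul' _ _ ENNReal.ofReal_ne_top]
    refine (mul_le_mul_right (h _ (inv_pos.2 hk)) _).trans ?_
    rw [mul_add]
    exact add_le_add (lintegral_mul_truncPow_inv_mul_le ha0 hk)
      (lintegral_mul_truncPow_inv_mul_le hb0 hk)
  calc ENNReal.ofReal ((2 * π) ^ 2) * ∫⁻ x, ENNReal.ofReal (a x ^ 2) * u x ∂μ
      = ∫⁻ x, liminf (D · x) atTop ∂μ := by
        simp_rw [(D_tendsto _).liminf_eq, mul_assoc]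
        rw [lintegral_const_mul' _ _ ENNReal.ofReal_ne_top]
    _ ≤ liminf (fun k => ∫⁻ x, D k x ∂μ) atTop := lintegral_liminf_le' fun k => by fun_prop
    _ ≤ _ := liminf_le_of_le (by isBoundedDefault) fun y hy => by
        obtain ⟨k, hk⟩ := hy.exists
        exact hk.trans (D_le k)

theorem exists_lintegral_rpow_le_of_lintegral_charDiffSq_le (hs : 0 < s) (hs2 : s ≤ 2)
    (μ : Measure α) [SFinite μ] (ν : Measure β) [SFinite ν] :
    ∃ C : ℝ≥0∞, C ≠ ⊤ ∧ ∀ (a : α → ℝ) (b : β → ℝ) (u v : α → ℝ≥0∞) (w : β → ℝ≥0∞),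
      Measurable a → (∀ x, 0 ≤ a x) → Measurable b → (∀ y, 0 ≤ b y) →
      AEMeasurable u μ → AEMeasurable v μ → AEMeasurable w ν →
      (∀ t > 0, ∫⁻ x, charDiffSq (t * a x) * u x ∂μ ≤
        ∫⁻ x, truncPow 2 (t * a x) * v x ∂μ + ∫⁻ y, truncPow 2 (t * b y) * w y ∂ν) →
      ∫⁻ x, ENNReal.ofReal (a x ^ s) * u x ∂μ ≤
        C * (∫⁻ x, ENNReal.ofReal (a x ^ s) * v x ∂μ +
          ∫⁻ y, ENNReal.ofReal (b y ^ s) * w y ∂ν) := by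
  rcases hs2.lt_or_eq with hs2 | rfl
  · have hc0 := charDiffSq.lintegral_mellinMeasure_ne_zero s
    have hc := charDiffSq.lintegral_mellinMeasure_ne_top hs hs2
    have hc' := truncPow.lintegral_mellinMeasure_ne_top hs hs2
    refine ⟨(∫⁻ t, charDiffSq t ∂mellinMeasure s)⁻¹ * ∫⁻ t, truncPow 2 t ∂mellinMeasure s,
      by finiteness, fun a b u v w ha ha0 hb hb0 hu hv hw h => ?_⟩
    rw [mul_assoc, ← ENNReal.mul_le_iff_le_inv hc0 hc]
    exact lintegral_charDiffSq_mul_lintegral_rpow_le hs.ne' ha ha0 hb hb0 hu hv hw h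
  · have hc0 : ENNReal.ofReal ((2 * π) ^ 2) ≠ 0 := (ENNReal.ofReal_pos.2 (by positivity)).ne'
    refine ⟨(ENNReal.ofReal ((2 * π) ^ 2))⁻¹, by finiteness,
      fun a b u v w ha ha0 _ hb0 hu _ _ h => ?_⟩
    simp_rw [Real.rpow_two]
    rw [← ENNReal.mul_le_iff_le_inv hc0 ENNReal.ofReal_ne_top]
    exact lintegral_sq_le_of_lintegral_charDiffSq_le ha ha0 hb0 hu h

end DifferenceToWeight

section WeightSplitting

open scoped ENNReal

variable {V ι : Type*} [NormedAddCommGroup V] {δ : ℝ}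

theorem one_le_one_add_norm_sq_rpow (hδ : 0 ≤ δ) (x : V) : 1 ≤ (1 + ‖x‖ ^ 2) ^ δ :=
  Real.one_le_rpow (le_add_of_nonneg_right (sq_nonneg _)) hδ

theorem norm_rpow_le_one_add_norm_sq_rpow (hδ : 0 ≤ δ) (x : V) :
    ‖x‖ ^ (2 * δ) ≤ (1 + ‖x‖ ^ 2) ^ δ := by
  rw [Real.rpow_mul (norm_nonneg _), Real.rpow_two]
  gcongr
  exact le_add_of_nonneg_left zero_le_one

theorem sqrt_rpow_sq {a : ℝ} (ha : 0 ≤ a) (δ : ℝ) : (√a ^ δ) ^ 2 = a ^ δ := by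
  rw [← Real.rpow_mul_natCast (Real.sqrt_nonneg a), mul_comm,
    Real.rpow_natCast_mul (Real.sqrt_nonneg a), Real.sq_sqrt ha]

theorem eLpNorm_two_sqrt_one_add_norm_sq_rpow_mul_sq [MeasurableSpace V] (μ : Measure V) (δ : ℝ)
    (g : V → ℂ) :
    eLpNorm (fun x => ((√(1 + ‖x‖ ^ 2) ^ δ : ℝ) : ℂ) * g x) 2 μ ^ 2 =
      ∫⁻ x, ENNReal.ofReal ((1 + ‖x‖ ^ 2) ^ δ) * ‖g x‖ₑ ^ 2 ∂μ := by
  rw [eLpNorm_two_sq]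
  refine lintegral_congr fun x => ?_
  rw [enorm_mul, mul_pow, ← ofReal_norm (Complex.ofReal _), Complex.norm_real,
    Real.norm_of_nonneg (by positivity), ← ENNReal.ofReal_pow (by positivity),
    sqrt_rpow_sq (by positivity)]

theorem eLpNorm_two_le_sqrt_one_add_norm_sq_rpow_mul [MeasurableSpace V] (μ : Measure V)
    (hδ : 0 ≤ δ) (g : V → ℂ) :
    eLpNorm g 2 μ ≤ eLpNorm (fun x => ((√(1 + ‖x‖ ^ 2) ^ δ : ℝ) : ℂ) * g x) 2 μ := by
  refine (ENNReal.pow_le_pow_left_iff two_ne_zero).1 ?_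
  rw [eLpNorm_two_sq, eLpNorm_two_sqrt_one_add_norm_sq_rpow_mul_sq]
  exact lintegral_mono fun x => le_mul_of_one_le_left'
    (ENNReal.one_le_ofReal.2 (one_le_one_add_norm_sq_rpow hδ x))

theorem rpow_sum_le_sum_rpow {p : ℝ} (hp0 : 0 < p) (hp1 : p ≤ 1) (S : Finset ι) {a : ι → ℝ}
    (ha : ∀ i ∈ S, 0 ≤ a i) : (∑ i ∈ S, a i) ^ p ≤ ∑ i ∈ S, a i ^ p :=
  Finset.le_sum_of_subadditive_on_pred (fun x : ℝ => x ^ p) (0 ≤ ·) (Real.zero_rpow hp0.ne').le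
    (fun _ _ hx hy => Real.rpow_add_le_add_rpow hx hy hp0.le hp1) (fun _ _ => add_nonneg) a ha

variable [InnerProductSpace ℝ V] [Fintype ι]

theorem one_add_norm_sq_rpow_le_sum_inner (b : OrthonormalBasis ι ℝ V) (hδ0 : 0 < δ) (hδ1 : δ ≤ 1)
    (x : V) : (1 + ‖x‖ ^ 2) ^ δ ≤ 1 + ∑ i, |⟪b i, x⟫| ^ (2 * δ) := by
  calc (1 + ‖x‖ ^ 2) ^ δ ≤ 1 + (‖x‖ ^ 2) ^ δ := by
        simpa using Real.rpow_add_le_add_rpow zero_le_one (sq_nonneg ‖x‖) hδ0.le hδ1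
    _ = 1 + (∑ i, |⟪b i, x⟫| ^ 2) ^ δ := by simp only [sq_abs, b.sum_sq_inner_right]
    _ ≤ 1 + ∑ i, (|⟪b i, x⟫| ^ 2) ^ δ := by
        gcongr
        exact rpow_sum_le_sum_rpow hδ0 hδ1 _ fun i _ => sq_nonneg _
    _ = 1 + ∑ i, |⟪b i, x⟫| ^ (2 * δ) := by
        simp only [Real.rpow_mul (abs_nonneg _), Real.rpow_two]

theorem lintegral_one_add_norm_sq_rpow_mul_le [MeasurableSpace V] [BorelSpace V]
    [SecondCountableTopology V] {μ : Measure V} (b : OrthonormalBasis ι ℝ V) (hδ0 : 0 < δ)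
    (hδ1 : δ ≤ 1) {g : V → ℝ≥0∞} (hg : AEMeasurable g μ) :
    ∫⁻ x, ENNReal.ofReal ((1 + ‖x‖ ^ 2) ^ δ) * g x ∂μ ≤
      ∫⁻ x, g x ∂μ + ∑ i, ∫⁻ x, ENNReal.ofReal (|⟪b i, x⟫| ^ (2 * δ)) * g x ∂μ := by
  have integrand_measurable (i : ι) :
      AEMeasurable (fun x => ENNReal.ofReal (|⟪b i, x⟫| ^ (2 * δ)) * g x) μ := by fun_prop
  rw [← lintegral_finsetSum' _ fun i _ => integrand_measurable i, ← lintegral_add_left' hg]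
  refine lintegral_mono fun x => ?_
  rw [← Finset.sum_mul, ← one_add_mul, ← ENNReal.ofReal_one,
    ← ENNReal.ofReal_sum_of_nonneg fun _ _ => by positivity,
    ← ENNReal.ofReal_add zero_le_one (by positivity)]
  gcongr
  exact one_add_norm_sq_rpow_le_sum_inner b hδ0 hδ1 x

end WeightSplitting

section FourierMultiplier

open FourierTransform Module
open scoped ENNReal

variable {V E : Type*} [NormedAddCommGroup V] [InnerProductSpace ℝ V] [FiniteDimensional ℝ V]
  [MeasurableSpace V] [BorelSpace V] [NormedAddCommGroup E] [InnerProductSpace ℂ E]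
  {q : V → ℂ} {M s δ : ℝ}

/-- The Fourier multiplier with symbol `q`, in the normalization `e ^ (2πi⟪x, ξ⟫)` of `𝓕` and as an
operator on functions, given by an absolutely convergent integral if `q • 𝓕 f` is integrable. -/
def fourierMultiplier (q : V → ℂ) (f : V → E) : V → E := 𝓕⁻ fun ξ => q ξ • 𝓕 f ξ

namespace IsScaleLipschitz

theorem integrable_smul (hq : IsScaleLipschitz M q) {g : V → E} (hg : Integrable g) :
    Integrable fun ξ => q ξ • g ξ :=
  hg.bdd_smul M hq.measurable.aestronglyMeasurable (ae_of_all _ hq.norm_le)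

theorem memLp_smul (hq : IsScaleLipschitz M q) {g : V → E} {p : ℝ≥0∞} (hg : MemLp g p) :
    MemLp (fun ξ => q ξ • g ξ) p :=
  hg.of_le_mul (hq.measurable.aestronglyMeasurable.smul hg.1) (ae_of_all _ fun ξ => by
    rw [norm_smul]
    exact mul_le_mul_of_nonneg_right (hq.norm_le ξ) (norm_nonneg _))

theorem lintegral_enorm_smul_add_sub_sq_le [Nontrivial V] (hq : IsScaleLipschitz M q) {g : V → E}
    (hg : AEStronglyMeasurable g) (h : V) :
    ∫⁻ ξ, ‖q (ξ + h) • g (ξ + h) - q ξ • g ξ‖ₑ ^ 2 ≤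
      2 * ENNReal.ofReal M ^ 2 * (∫⁻ ξ, ‖g (ξ + h) - g ξ‖ₑ ^ 2) +
        2 * ENNReal.ofReal (4 * M ^ 2) * ∫⁻ ξ, truncPow 2 (‖h‖ * ‖ξ‖⁻¹) * ‖g ξ‖ₑ ^ 2 := by
  have : AEMeasurable fun ξ => ‖g ξ‖ₑ ^ 2 := hg.enorm.pow_const 2
  rw [← lintegral_const_mul' _ _ (by finiteness), ← lintegral_const_mul' _ _ (by finiteness),
    ← lintegral_add_right' _ (by fun_prop)]
  refine lintegral_mono_ae ?_
  filter_upwards [compl_mem_ae_iff.2 (measure_singleton (0 : V))] with ξ hξ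
  exact hq.enorm_smul_add_sub_sq_le g hξ h

variable [CompleteSpace E] {f : V → E}

theorem lintegral_enorm_fourierMultiplier_sq_le (hq : IsScaleLipschitz M q) (hf₁ : Integrable f)
    (hf₂ : MemLp f 2) (hf : Integrable (𝓕 f)) :
    ∫⁻ x, ‖fourierMultiplier q f x‖ₑ ^ 2 ≤ ENNReal.ofReal M ^ 2 * ∫⁻ x, ‖f x‖ₑ ^ 2 := by
  rw [fourierMultiplier, lintegral_enorm_fourierInv_sq (hq.integrable_smul hf)
    (hq.memLp_smul (memLp_two_fourier hf₁ hf₂)), ← lintegral_enorm_fourier_sq hf₁ hf₂,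
    ← lintegral_const_mul' _ _ (by finiteness)]
  refine lintegral_mono fun ξ => ?_
  rw [enorm_smul, mul_pow]
  gcongr
  exact hq.enorm_le ξ

theorem lintegral_charDiffSq_mul_enorm_fourierMultiplier_sq_le [Nontrivial V]
    (hq : IsScaleLipschitz M q) (hf₁ : Integrable f) (hf₂ : MemLp f 2) (hf : Integrable (𝓕 f))
    (h : V) :
    ∫⁻ x, charDiffSq ⟪h, x⟫ * ‖fourierMultiplier q f x‖ₑ ^ 2 ≤
      2 * ENNReal.ofReal M ^ 2 * (∫⁻ x, charDiffSq ⟪h, x⟫ * ‖f x‖ₑ ^ 2) +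
        2 * ENNReal.ofReal (4 * M ^ 2) * ∫⁻ ξ, truncPow 2 (‖h‖ * ‖ξ‖⁻¹) * ‖𝓕 f ξ‖ₑ ^ 2 := by
  rw [fourierMultiplier, lintegral_charDiffSq_mul_enorm_fourierInv_sq (hq.integrable_smul hf)
    (hq.memLp_smul (memLp_two_fourier hf₁ hf₂)), lintegral_charDiffSq_mul_enorm_sq hf₁ hf₂]
  exact hq.lintegral_enorm_smul_add_sub_sq_le hf.1 h

theorem exists_lintegral_charDiffSq_fourierMultiplier_le [Nontrivial V]
    (hq : IsScaleLipschitz M q) :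
    ∃ K : ℝ≥0∞, K ≠ ⊤ ∧ ∀ e : V, ‖e‖ = 1 → ∀ f : V → E,
      Integrable f → MemLp f 2 → Integrable (𝓕 f) → ∀ t > 0,
      ∫⁻ x, charDiffSq (t * |⟪e, x⟫|) * ‖fourierMultiplier q f x‖ₑ ^ 2 ≤
        K * (∫⁻ x, truncPow 2 (t * |⟪e, x⟫|) * ‖f x‖ₑ ^ 2) +
          K * ∫⁻ ξ, truncPow 2 (t * ‖ξ‖⁻¹) * ‖𝓕 f ξ‖ₑ ^ 2 := by
  set A := 2 * ENNReal.ofReal M ^ 2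
  set B := 2 * ENNReal.ofReal (4 * M ^ 2)
  refine ⟨A * ENNReal.ofReal ((2 * π) ^ 2) + B, by finiteness,
    fun e he f hf₁ hf₂ hf t ht => ?_⟩
  have inner_eq (x : V) : charDiffSq (t * |⟪e, x⟫|) = charDiffSq ⟪t • e, x⟫ := by
    rw [real_inner_smul_left, ← charDiffSq.abs_right (t * ⟪e, x⟫), abs_mul, abs_of_pos ht]
  have norm_eq : ‖t • e‖ = t := by rw [norm_smul, he, mul_one, Real.norm_of_nonneg ht.le]
  have charDiffSq_le : ∫⁻ x, charDiffSq ⟪t • e, x⟫ * ‖f x‖ₑ ^ 2 ≤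
      ENNReal.ofReal ((2 * π) ^ 2) * ∫⁻ x, truncPow 2 (t * |⟪e, x⟫|) * ‖f x‖ₑ ^ 2 := by
    rw [← lintegral_const_mul' _ _ ENNReal.ofReal_ne_top]
    refine lintegral_mono fun x => ?_
    rw [← inner_eq, ← mul_assoc]
    exact mul_le_mul_left (charDiffSq.le_truncPow (by positivity)) _
  simp_rw [inner_eq]
  refine (hq.lintegral_charDiffSq_mul_enorm_fourierMultiplier_sq_le hf₁ hf₂ hf (t • e)).trans ?_
  rw [norm_eq]
  refine add_le_add ((mul_le_mul_right charDiffSq_le _).trans ?_) ?_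
  · rw [← mul_assoc]
    exact mul_le_mul_left le_self_add _
  · exact mul_le_mul_left le_add_self _

theorem exists_lintegral_inner_rpow_fourierMultiplier_le [Nontrivial V]
    (hq : IsScaleLipschitz M q) (hs : 0 < s) (hs2 : s ≤ 2) :
    ∃ C : ℝ≥0∞, C ≠ ⊤ ∧ ∀ e : V, ‖e‖ = 1 → ∀ f : V → E,
      Integrable f → MemLp f 2 → Integrable (𝓕 f) →
      ∫⁻ x, ENNReal.ofReal (|⟪e, x⟫| ^ s) * ‖fourierMultiplier q f x‖ₑ ^ 2 ≤
        C * ((∫⁻ x, ENNReal.ofReal (|⟪e, x⟫| ^ s) * ‖f x‖ₑ ^ 2) +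
          ∫⁻ ξ, ENNReal.ofReal (‖ξ‖⁻¹ ^ s) * ‖𝓕 f ξ‖ₑ ^ 2) := by
  obtain ⟨C, hC, weight_le⟩ := exists_lintegral_rpow_le_of_lintegral_charDiffSq_le hs hs2
    (volume : Measure V) (volume : Measure V)
  obtain ⟨K, hK, difference_le⟩ := hq.exists_lintegral_charDiffSq_fourierMultiplier_le (E := E)
  refine ⟨C * K, by finiteness, fun e he f hf₁ hf₂ hf => ?_⟩
  have hTf : AEMeasurable fun x => ‖fourierMultiplier q f x‖ₑ ^ 2 :=
    ((continuous_fourierInv (hq.integrable_smul hf)).enorm.measurable.pow_const 2).aemeasurable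
  rw [mul_assoc, mul_add K]
  simp only [← lintegral_const_mul' _ _ hK, mul_left_comm K]
  refine weight_le (fun x => |⟪e, x⟫|) (fun ξ => ‖ξ‖⁻¹) _ (fun x => K * ‖f x‖ₑ ^ 2)
    (fun ξ => K * ‖𝓕 f ξ‖ₑ ^ 2) (by fun_prop) (fun _ => abs_nonneg _) (by fun_prop)
    (fun _ => by positivity) hTf ((hf₁.1.enorm.pow_const 2).const_mul _)
    ((hf.1.enorm.pow_const 2).const_mul _) fun t ht => ?_
  simp only [mul_left_comm _ K, lintegral_const_mul' _ _ hK]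
  exact difference_le e he f hf₁ hf₂ hf t ht

theorem exists_lintegral_inner_rpow_fourierMultiplier_le_norm_rpow (hq : IsScaleLipschitz M q)
    (hs : 0 < s) (hs2 : s ≤ 2) (hsV : s < finrank ℝ V) :
    ∃ C : ℝ≥0∞, C ≠ ⊤ ∧ ∀ e : V, ‖e‖ = 1 → ∀ f : V → E,
      Integrable f → MemLp f 2 → Integrable (𝓕 f) →
      ∫⁻ x, ENNReal.ofReal (|⟪e, x⟫| ^ s) * ‖fourierMultiplier q f x‖ₑ ^ 2 ≤
        C * ∫⁻ x, ENNReal.ofReal (‖x‖ ^ s) * ‖f x‖ₑ ^ 2 := by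
  have : Nontrivial V := finrank_pos_iff.1 (by exact_mod_cast hs.trans hsV)
  obtain ⟨C, hC, directional_le⟩ :=
    hq.exists_lintegral_inner_rpow_fourierMultiplier_le (E := E) hs hs2
  obtain ⟨H, hH, hardy⟩ := exists_lintegral_hardy_fourier_le (V := V) (E := E) hs hsV
  refine ⟨C * (1 + H), by finiteness, fun e he f hf₁ hf₂ hf => ?_⟩
  refine (directional_le e he f hf₁ hf₂ hf).trans ?_
  rw [mul_assoc, add_mul, one_mul]
  gcongr
  · simpa [he] using abs_real_inner_le_norm e _
  · exact hardy f hf₁ hf₂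

theorem exists_lintegral_one_add_norm_sq_rpow_fourierMultiplier_le (hq : IsScaleLipschitz M q)
    (hδ0 : 0 < δ) (hδ1 : δ ≤ 1) (hδV : 2 * δ < finrank ℝ V) :
    ∃ C : ℝ≥0∞, C ≠ ⊤ ∧ ∀ f : V → E, Integrable f → MemLp f 2 → Integrable (𝓕 f) →
      ∫⁻ x, ENNReal.ofReal ((1 + ‖x‖ ^ 2) ^ δ) * ‖fourierMultiplier q f x‖ₑ ^ 2 ≤
        C * ∫⁻ x, ENNReal.ofReal ((1 + ‖x‖ ^ 2) ^ δ) * ‖f x‖ₑ ^ 2 := by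
  obtain ⟨C, hC, directional_le⟩ :=
    hq.exists_lintegral_inner_rpow_fourierMultiplier_le_norm_rpow (E := E) (s := 2 * δ)
      (by positivity) (by linarith) hδV
  refine ⟨ENNReal.ofReal M ^ 2 + finrank ℝ V * C, by finiteness, fun f hf₁ hf₂ hf => ?_⟩
  have hTf : AEMeasurable fun x => ‖fourierMultiplier q f x‖ₑ ^ 2 :=
    ((continuous_fourierInv (hq.integrable_smul hf)).enorm.measurable.pow_const 2).aemeasurable
  set b := stdOrthonormalBasis ℝ V
  set W := ∫⁻ x, ENNReal.ofReal ((1 + ‖x‖ ^ 2) ^ δ) * ‖f x‖ₑ ^ 2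
  have unweighted_le : ∫⁻ x, ‖fourierMultiplier q f x‖ₑ ^ 2 ≤ ENNReal.ofReal M ^ 2 * W := by
    refine (hq.lintegral_enorm_fourierMultiplier_sq_le hf₁ hf₂ hf).trans ?_
    refine mul_le_mul_right (lintegral_mono fun x => ?_) _
    exact le_mul_of_one_le_left'
      (ENNReal.one_le_ofReal.2 (one_le_one_add_norm_sq_rpow hδ0.le x))
  have coordinate_le (i) : ∫⁻ x, ENNReal.ofReal (|⟪b i, x⟫| ^ (2 * δ)) *
      ‖fourierMultiplier q f x‖ₑ ^ 2 ≤ C * W := by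
    refine (directional_le (b i) (b.norm_eq_one i) f hf₁ hf₂ hf).trans ?_
    refine mul_le_mul_right (lintegral_mono fun x => ?_) _
    gcongr
    exact norm_rpow_le_one_add_norm_sq_rpow hδ0.le x
  calc _ ≤ _ := lintegral_one_add_norm_sq_rpow_mul_le b hδ0 hδ1 hTf
    _ ≤ ENNReal.ofReal M ^ 2 * W + ∑ _i : Fin (finrank ℝ V), C * W := by
      gcongr with i
      exact coordinate_le i
    _ = (ENNReal.ofReal M ^ 2 + finrank ℝ V * C) * W := by
      rw [Finset.sum_const, Finset.card_univ, Fintype.card_fin, nsmul_eq_mul]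
      ring

theorem exists_eLpNorm_fourierMultiplier_le (hq : IsScaleLipschitz M q)
    (hδ0 : 0 < δ) (hδ1 : δ ≤ 1) (hδV : 2 * δ < finrank ℝ V) :
    ∃ C > 0, ∀ f : V → ℂ, Integrable f → Integrable (𝓕 f) →
      eLpNorm (fun x => ((√(1 + ‖x‖ ^ 2) ^ δ : ℝ) : ℂ) * fourierMultiplier q f x) 2 volume ≤
        ENNReal.ofReal C * eLpNorm (fun x => ((√(1 + ‖x‖ ^ 2) ^ δ : ℝ) : ℂ) * f x) 2 volume := by
  obtain ⟨K, hK, lintegral_le⟩ :=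
    hq.exists_lintegral_one_add_norm_sq_rpow_fourierMultiplier_le (E := ℂ) hδ0 hδ1 hδV
  have K_le : K ≤ ENNReal.ofReal (K.toReal + 1) ^ 2 := by
    rw [← ENNReal.ofReal_pow (by positivity)]
    refine (ENNReal.le_ofReal_iff_toReal_le hK (by positivity)).2 ?_
    nlinarith [K.toReal_nonneg]
  refine ⟨K.toReal + 1, by positivity, fun f hf₁ hf => ?_⟩
  by_cases hf₂ : MemLp f 2
  · refine (ENNReal.pow_le_pow_left_iff two_ne_zero).1 ?_
    simp only [mul_pow, eLpNorm_two_sqrt_one_add_norm_sq_rpow_mul_sq]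
    exact (lintegral_le f hf₁ hf₂ hf).trans (by gcongr)
  · have eLpNorm_eq_top : eLpNorm f 2 volume = ⊤ := by
      by_contra h
      exact hf₂ ⟨hf₁.1, lt_top_iff_ne_top.2 h⟩
    have weighted_eq_top := top_unique
      (eLpNorm_eq_top.ge.trans (eLpNorm_two_le_sqrt_one_add_norm_sq_rpow_mul volume hδ0.le f))
    rw [weighted_eq_top, ENNReal.mul_top (by positivity)]
    exact le_top

end IsScaleLipschitz

end FourierMultiplier

section Normalization

open FourierTransform

variable {n : ℕ}

theorem FT_eq_fourier (f : EuclideanSpace ℝ (Fin n) → ℂ) (ξ : EuclideanSpace ℝ (Fin n)) :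
    FT n f ξ = ((2 * π) ^ (-(n : ℝ) / 2) : ℝ) • 𝓕 f ((2 * π)⁻¹ • ξ) := by
  rw [FT, Real.fourier_eq']
  congr 2
  ext x
  have hπ : (π : ℂ) ≠ 0 := by exact_mod_cast pi_ne_zero
  rw [smul_eq_mul, inner_smul_right]
  congr 2
  push_cast
  field_simp

theorem IFT_eq_fourierInv (F : EuclideanSpace ℝ (Fin n) → ℂ) (x : EuclideanSpace ℝ (Fin n)) :
    IFT n F x = ((2 * π) ^ (-(n : ℝ) / 2) : ℝ) • 𝓕⁻ F ((2 * π)⁻¹ • x) := by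
  rw [Real.fourierInv_eq_fourier_neg, ← smul_neg, ← FT_eq_fourier, IFT, FT]
  congr 2
  ext ξ
  rw [inner_neg_right, real_inner_comm, Complex.ofReal_neg, neg_mul_neg]

theorem integrable_FT_iff {f : EuclideanSpace ℝ (Fin n) → ℂ} :
    Integrable (FT n f) ↔ Integrable (𝓕 f) := by
  rw [show FT n f = _ from funext (FT_eq_fourier f),
    integrable_fun_smul_iff (Real.rpow_pos_of_pos two_pi_pos _).ne',
    integrable_comp_smul_iff volume (𝓕 f) (inv_ne_zero two_pi_pos.ne')]

theorem mult_eq_fourierMultiplier (q f : EuclideanSpace ℝ (Fin n) → ℂ) :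
    mult n q f = fourierMultiplier (fun ξ => q ((2 * π) • ξ)) f := by
  set c : ℝ := (2 * π) ^ (-(n : ℝ) / 2)
  have c_mul_c : c * (c * (2 * π) ^ n) = 1 := by
    rw [← Real.rpow_natCast, ← Real.rpow_add two_pi_pos, ← Real.rpow_add two_pi_pos]
    convert Real.rpow_zero (2 * π) using 2
    ring
  ext x
  set g : EuclideanSpace ℝ (Fin n) → ℂ := fun η =>
    fourierChar ⟪η, x⟫ • q ((2 * π) • η) • 𝓕 f η with hg
  have integrand_eq (ξ : EuclideanSpace ℝ (Fin n)) :
      fourierChar ⟪ξ, (2 * π)⁻¹ • x⟫ • (q ξ * FT n f ξ) = c • g ((2 * π)⁻¹ • ξ) := by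
    simp only [hg, FT_eq_fourier, real_inner_smul_left, real_inner_smul_right,
      smul_inv_smul₀ two_pi_pos.ne', mul_smul_comm, smul_comm c, smul_eq_mul, c]
  calc mult n q f x = c • ∫ ξ, c • g ((2 * π)⁻¹ • ξ) := by
        rw [mult, IFT_eq_fourierInv, Real.fourierInv_eq]
        simp only [integrand_eq, c]
    _ = (c * (c * (2 * π) ^ n)) • ∫ η, g η := by
        rw [integral_smul, Measure.integral_comp_inv_smul_of_nonneg _ _ two_pi_pos.le,
          finrank_euclideanSpace_fin, smul_smul, smul_smul, mul_assoc]
    _ = fourierMultiplier (fun ξ => q ((2 * π) • ξ)) f x := by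
        rw [c_mul_c, one_smul, fourierMultiplier, Real.fourierInv_eq]

end Normalization

theorem weighted_bound_multiplier_general (n : ℕ) {δ M : ℝ} (hδ0 : 0 < δ) (hδ1 : δ ≤ 1)
    (hδn : 2 * δ < n) {q : EuclideanSpace ℝ (Fin n) → ℂ} (hq : IsScaleLipschitz M q) :
    ∃ C > 0, ∀ f : EuclideanSpace ℝ (Fin n) → ℂ, Integrable f → Integrable (FT n f) →
      eLpNorm (fun x => ((√(1 + ‖x‖ ^ 2) ^ δ : ℝ) : ℂ) * mult n q f x) 2 volume ≤
        ENNReal.ofReal C * eLpNorm (fun x => ((√(1 + ‖x‖ ^ 2) ^ δ : ℝ) : ℂ) * f x) 2 volume := by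
  obtain ⟨C, hC, fourierMultiplier_le⟩ :=
    (hq.comp_smul two_pi_pos.ne').exists_eLpNorm_fourierMultiplier_le hδ0 hδ1
      (by rwa [finrank_euclideanSpace_fin])
  refine ⟨C, hC, fun f hf hFf => ?_⟩
  rw [mult_eq_fourierMultiplier]
  exact fourierMultiplier_le f hf (integrable_FT_iff.1 hFf)

theorem weighted_bound_multiplier (n : ℕ) (hn : 2 ≤ n) (δ : ℝ) (hδ0 : 0 < δ)
    (hδ1 : 3 ≤ n → δ ≤ 1) (hδ2 : n = 2 → δ < 1)
    (q : EuclideanSpace ℝ (Fin n) → ℂ)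
    (hq_smooth : ContDiffOn ℝ (⊤ : ℕ∞) q {(0 : EuclideanSpace ℝ (Fin n))}ᶜ)
    (hq_hom : ∀ t : ℝ, 0 < t → ∀ ξ, q (t • ξ) = q ξ) :
    ∃ C > 0, ∀ f : SchwartzMap (EuclideanSpace ℝ (Fin n)) ℂ,
      eLpNorm (fun x : EuclideanSpace ℝ (Fin n) =>
          ((Real.sqrt (1 + ‖x‖ ^ 2) ^ (δ) : ℝ) : ℂ) * mult n q (fun y => f y) x) 2 volume
        ≤ ENNReal.ofReal C *
            eLpNorm (fun x : EuclideanSpace ℝ (Fin n) => ((Real.sqrt (1 + ‖x‖ ^ 2) ^ (δ) : ℝ) : ℂ) * f x) 2 volume := by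
  have hδ_le : δ ≤ 1 ∧ 2 * δ < n := by
    rcases hn.eq_or_lt with rfl | hn
    · have := hδ2 rfl
      constructor <;> push_cast <;> linarith
    · have hδ_le := hδ1 hn
      have : (3 : ℝ) ≤ n := by exact_mod_cast hn
      constructor <;> linarith
  obtain ⟨M, hq⟩ :=
    exists_isScaleLipschitz_of_homogeneous (hq_smooth.of_le (by exact_mod_cast le_top)) hq_hom
  obtain ⟨C, hC, mult_le⟩ := weighted_bound_multiplier_general n hδ0 hδ_le.1 hδ_le.2 hq
  exact ⟨C, hC, fun f => mult_le f f.integrable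
    (integrable_FT_iff.2 (FourierTransform.fourier f).integrable)⟩
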